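/- Let G be a finitely generated group, let N ⊴ G be a finite normal subgroup, and let ψ be an automorphism of G with ψ(N) = N, inducing the automorphism ψ̄ on H = G/N. Then gr_{ψ,G} ≃ gr_{ψ̄,H}. -/

import Mathlib

/-- Word norm with respect to a finite generating set (inverses of generators allowed). -/
noncomputable def wordNorm {G : Type*} [Group G] (S : Finset G) (g : G) : ℕ :=
  sInf {n | ∃ l : List G, l.length = n ∧ (∀ x ∈ l, x ∈ S ∨ x⁻¹ ∈ S) ∧ l.prod = g}

/-- `x` and `y` are `ψ`-twisted conjugate. -/
def TwistedConj {G : Type*} [Group G] (ψ : G ≃* G) (x y : G) : Prop :=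
  ∃ g : G, g * x * (ψ g)⁻¹ = y

/-- The twisted conjugacy growth function: number of `ψ`-twisted conjugacy classes
with a representative of word norm at most `n`. -/
noncomputable def twistedGrowth {G : Type*} [Group G] (ψ : G ≃* G) (S : Finset G) (n : ℕ) : ℕ :=
  Set.ncard ((fun x => {y | TwistedConj ψ x y}) '' {g : G | wordNorm S g ≤ n})

def GrowthLE (f g : ℕ → ℝ) : Prop :=
  ∃ c : ℕ, 0 < c ∧ ∀ n : ℕ, max 1 (f n) ≤ c * max 1 (g (c * n))

def GrowthEquiv (f g : ℕ → ℝ) : Prop := GrowthLE f g ∧ GrowthLE g f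

/-!
Let `π : G → G ⧸ N` be the projection. For finite generating sets, `π` increases word norms by at
most a constant factor, and every element of the quotient lifts to one of comparable norm. As `π`
intertwines `ψ` and `ψ̄`, it maps twisted classes onto twisted classes, so lifting representatives
gives `gr_ψ̄ ≺ gr_ψ`. Conversely, if `π b` is `ψ̄`-conjugate to `π a`, then `b` is `ψ`-conjugate
to `a * k` for some `k ∈ N`, so at most `|N|` twisted classes of `G` lie over a given one of
`G ⧸ N`.
-/

lemma GrowthLE.of_le_mul {f g : ℕ → ℝ} (hg : Monotone g) {m C : ℕ}
    (h : ∀ n, f n ≤ m * g (C * n)) : GrowthLE f g := by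
  refine ⟨m + C + 1, by omega, fun n => max_le ?_ ?_⟩
  · exact one_le_mul_of_one_le_of_one_le (by norm_cast; omega) (le_max_left _ _)
  · calc f n ≤ m * g (C * n) := h n
      _ ≤ m * max 1 (g ((m + C + 1) * n)) := by
        gcongr
        exact (hg (Nat.mul_le_mul_right n (by omega))).trans (le_max_right _ _)
      _ ≤ (m + C + 1 : ℕ) * max 1 (g ((m + C + 1) * n)) := by
        gcongr
        omega

lemma ncard_image_le_mul_ncard_image {α β γ : Type*} {s : Set α} (hs : s.Finite) (f : α → β)
    (g : α → γ) {m : ℕ} (hm : ∀ a ∈ s, (f '' {b ∈ s | g b = g a}).ncard ≤ m) :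
    (f '' s).ncard ≤ m * (g '' s).ncard := by
  classical
  lift s to Finset α using hs
  have image_eq_biUnion : s.image f =
      (s.image g).biUnion fun c => {b ∈ s | g b = c}.image f := by
    ext
    simp only [Finset.mem_image, Finset.mem_biUnion, Finset.mem_filter]
    grind
  have card_fiber_le : ∀ c ∈ s.image g, ({b ∈ s | g b = c}.image f).card ≤ m := by
    intro c hc
    obtain ⟨a, ha, rfl⟩ := Finset.mem_image.1 hc
    rw [← Set.ncard_coe_finset]
    simpa using hm a ha
  calc (f '' s).ncard = (s.image f).card := by rw [← Finset.coe_image, Set.ncard_coe_finset]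
    _ ≤ (s.image g).card * m :=
      image_eq_biUnion ▸ Finset.card_biUnion_le_card_mul _ _ _ card_fiber_le
    _ = m * (g '' s).ncard := by rw [← Finset.coe_image, Set.ncard_coe_finset, mul_comm]

section WordNorm

variable {G H : Type*} [Group G] [Group H] {S : Finset G} {T : Finset H}

/-- The letters `S ∪ S⁻¹` of the words that `wordNorm S` measures. -/
def alphabet (S : Finset G) : Set G :=
  {x | x ∈ S ∨ x⁻¹ ∈ S}

lemma alphabet_finite (S : Finset G) : (alphabet S).Finite :=
  S.finite_toSet.union S.finite_toSet.inv

lemma wordNorm_prod_le_length {l : List G} (hl : ∀ x ∈ l, x ∈ alphabet S) :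
    wordNorm S l.prod ≤ l.length :=
  Nat.sInf_le ⟨l, rfl, hl, rfl⟩

lemma exists_word_length_eq_wordNorm (hS : Subgroup.closure (S : Set G) = ⊤) (g : G) :
    ∃ l : List G, l.length = wordNorm S g ∧ (∀ x ∈ l, x ∈ alphabet S) ∧ l.prod = g := by
  have hg : g ∈ Submonoid.closure (alphabet S) := by
    change g ∈ Submonoid.closure ((S : Set G) ∪ (S : Set G)⁻¹)
    rw [← Subgroup.closure_toSubmonoid, hS]
    exact Subgroup.mem_top g
  obtain ⟨l, hl, hprod⟩ := Submonoid.exists_list_of_mem_closure hg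
  exact Nat.sInf_mem (s := {n | ∃ l : List G, l.length = n ∧ _ ∧ l.prod = g})
    ⟨l.length, l, rfl, hl, hprod⟩

lemma wordNorm_mul_le (hS : Subgroup.closure (S : Set G) = ⊤) (g h : G) :
    wordNorm S (g * h) ≤ wordNorm S g + wordNorm S h := by
  obtain ⟨u, hu_length, hu, rfl⟩ := exists_word_length_eq_wordNorm hS g
  obtain ⟨v, hv_length, hv, rfl⟩ := exists_word_length_eq_wordNorm hS h
  rw [← hu_length, ← hv_length, ← List.prod_append, ← List.length_append]
  exact wordNorm_prod_le_length (List.forall_mem_append.2 ⟨hu, hv⟩)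

lemma wordNorm_prod_le_mul_length (hS : Subgroup.closure (S : Set G) = ⊤) {C : ℕ} {l : List G}
    (hl : ∀ x ∈ l, wordNorm S x ≤ C) : wordNorm S l.prod ≤ C * l.length := by
  induction l with
  | nil => exact wordNorm_prod_le_length (by simp)
  | cons x l ih =>
    obtain ⟨hx, hl⟩ := List.forall_mem_cons.1 hl
    calc wordNorm S (x :: l).prod ≤ wordNorm S x + wordNorm S l.prod := by
          rw [List.prod_cons]
          exact wordNorm_mul_le hS _ _
      _ ≤ C + C * l.length := add_le_add hx (ih hl)
      _ = C * (x :: l).length := by rw [List.length_cons]; ring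

lemma exists_wordNorm_prod_map_le (hS : Subgroup.closure (S : Set G) = ⊤) (T : Finset H)
    (f : H → G) : ∃ C : ℕ, ∀ l : List H, (∀ x ∈ l, x ∈ alphabet T) →
      wordNorm S (l.map f).prod ≤ C * l.length := by
  obtain ⟨C, hC⟩ := ((alphabet_finite T).image fun x => wordNorm S (f x)).bddAbove
  refine ⟨C, fun l hl => ?_⟩
  rw [← l.length_map (f := f)]
  exact wordNorm_prod_le_mul_length hS
    (List.forall_mem_map.2 fun x hx => hC (Set.mem_image_of_mem _ (hl x hx)))

lemma exists_wordNorm_map_le (hS : Subgroup.closure (S : Set G) = ⊤)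
    (hT : Subgroup.closure (T : Set H) = ⊤) (π : G →* H) :
    ∃ C : ℕ, ∀ g, wordNorm T (π g) ≤ C * wordNorm S g := by
  obtain ⟨C, hC⟩ := exists_wordNorm_prod_map_le hT S π
  refine ⟨C, fun g => ?_⟩
  obtain ⟨l, hl_length, hl, rfl⟩ := exists_word_length_eq_wordNorm hS g
  rw [map_list_prod, ← hl_length]
  exact hC l hl

lemma exists_lift_wordNorm_le (hS : Subgroup.closure (S : Set G) = ⊤)
    (hT : Subgroup.closure (T : Set H) = ⊤) {π : G →* H} (hπ : Function.Surjective π) :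
    ∃ C : ℕ, ∀ h, ∃ g, π g = h ∧ wordNorm S g ≤ C * wordNorm T h := by
  obtain ⟨σ, hσ⟩ := hπ.hasRightInverse
  obtain ⟨C, hC⟩ := exists_wordNorm_prod_map_le hS T σ
  refine ⟨C, fun h => ?_⟩
  obtain ⟨l, hl_length, hl, rfl⟩ := exists_word_length_eq_wordNorm hT h
  refine ⟨(l.map σ).prod, ?_, hl_length ▸ hC l hl⟩
  rw [map_list_prod, List.map_map, hσ.comp_eq_id, List.map_id]

/-- The closed ball of radius `n` about the identity for the word norm of `S`. -/
def wordBall (S : Finset G) (n : ℕ) : Set G :=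
  {g | wordNorm S g ≤ n}

lemma wordBall_finite (hS : Subgroup.closure (S : Set G) = ⊤) (n : ℕ) :
    (wordBall S n).Finite := by
  have := (alphabet_finite S).to_subtype
  refine ((List.finite_length_le (alphabet S) n).image
    fun l => (l.map Subtype.val).prod).subset fun g hg => ?_
  obtain ⟨l, hl_length, hl, rfl⟩ := exists_word_length_eq_wordNorm hS g
  lift l to List (alphabet S) using hl
  rw [List.length_map] at hl_length
  exact ⟨l, hl_length.trans_le hg, rfl⟩

end WordNorm

section TwistedConj

variable {G H : Type*} [Group G] [Group H] {ψ : G ≃* G} {φ : H ≃* H} {π : G →* H}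

lemma TwistedConj.refl (ψ : G ≃* G) (x : G) : TwistedConj ψ x x :=
  ⟨1, by simp⟩

lemma TwistedConj.symm {x y : G} : TwistedConj ψ x y → TwistedConj ψ y x := by
  rintro ⟨g, rfl⟩
  exact ⟨g⁻¹, by simp only [map_inv]; group⟩

lemma TwistedConj.trans {x y z : G} :
    TwistedConj ψ x y → TwistedConj ψ y z → TwistedConj ψ x z := by
  rintro ⟨g, rfl⟩ ⟨h, rfl⟩
  exact ⟨h * g, by simp only [map_mul]; group⟩

lemma TwistedConj.map (hπψ : Function.Semiconj π ψ φ) {x y : G} :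
    TwistedConj ψ x y → TwistedConj φ (π x) (π y) := by
  rintro ⟨g, rfl⟩
  exact ⟨π g, by simp only [map_mul, map_inv, hπψ.eq]⟩

lemma TwistedConj.exists_mem_ker_of_map (hπ : Function.Surjective π)
    (hπψ : Function.Semiconj π ψ φ) {x y : G} :
    TwistedConj φ (π x) (π y) → ∃ k ∈ π.ker, TwistedConj ψ x (y * k) := by
  rintro ⟨h, hxy⟩
  obtain ⟨g, rfl⟩ := hπ h
  refine ⟨y⁻¹ * (g * x * (ψ g)⁻¹), ?_, g, by group⟩
  rw [MonoidHom.mem_ker, map_mul, map_inv, map_mul, map_mul, map_inv, hπψ.eq, hxy, inv_mul_cancel]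

/-- The `ψ`-twisted conjugacy class `[x]_ψ`, encoded as a set as in `twistedGrowth`. -/
def twistedClass (ψ : G ≃* G) (x : G) : Set G :=
  {y | TwistedConj ψ x y}

lemma twistedClass_eq_iff {x y : G} :
    twistedClass ψ x = twistedClass ψ y ↔ TwistedConj ψ x y := by
  refine ⟨fun h => ?_, fun h => Set.ext fun z => ⟨h.symm.trans, h.trans⟩⟩
  have hy : y ∈ twistedClass ψ y := TwistedConj.refl ψ y
  rwa [← h] at hy

end TwistedConj

section TwistedGrowth

variable {G H : Type*} [Group G] [Group H] {ψ : G ≃* G} {φ : H ≃* H} {π : G →* H}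
  {S : Finset G} {T : Finset H}

lemma twistedGrowth_eq_ncard_image (ψ : G ≃* G) (S : Finset G) (n : ℕ) :
    twistedGrowth ψ S n = (twistedClass ψ '' wordBall S n).ncard :=
  rfl

lemma twistedGrowth_mono (ψ : G ≃* G) (hS : Subgroup.closure (S : Set G) = ⊤) :
    Monotone (twistedGrowth ψ S) := fun _ n hmn =>
  Set.ncard_le_ncard (Set.image_mono fun _ hg => le_trans hg hmn) ((wordBall_finite hS n).image _)

lemma ncard_image_twistedClass_map_le (hπψ : Function.Semiconj π ψ φ) {s : Set G}
    (hs : s.Finite) :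
    ((fun x => twistedClass φ (π x)) '' s).ncard ≤ (twistedClass ψ '' s).ncard := by
  rw [← one_mul (twistedClass ψ '' s).ncard]
  refine ncard_image_le_mul_ncard_image hs _ _ fun a _ => ?_
  rw [← Set.ncard_singleton (twistedClass φ (π a))]
  refine Set.ncard_le_ncard ?_
  rintro _ ⟨b, ⟨-, hba⟩, rfl⟩
  exact twistedClass_eq_iff.2 ((twistedClass_eq_iff.1 hba).map hπψ)

lemma ncard_image_twistedClass_le_card_ker_mul [Finite π.ker] (hπ : Function.Surjective π)
    (hπψ : Function.Semiconj π ψ φ) {s : Set G} (hs : s.Finite) :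
    (twistedClass ψ '' s).ncard ≤
      Nat.card π.ker * ((fun x => twistedClass φ (π x)) '' s).ncard := by
  refine ncard_image_le_mul_ncard_image hs _ _ fun a _ => ?_
  have hker : (π.ker : Set G).Finite := Set.toFinite _
  refine (Set.ncard_le_ncard ?_ (hker.image fun k => twistedClass ψ (a * k))).trans
    (Set.ncard_image_le hker)
  rintro _ ⟨b, ⟨-, hba⟩, rfl⟩
  obtain ⟨k, hk, hbk⟩ := (twistedClass_eq_iff.1 hba).exists_mem_ker_of_map hπ hπψ
  exact ⟨k, hk, (twistedClass_eq_iff.2 hbk).symm⟩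

lemma growthLE_twistedGrowth_of_surjective (hS : Subgroup.closure (S : Set G) = ⊤)
    (hT : Subgroup.closure (T : Set H) = ⊤) (hπ : Function.Surjective π)
    (hπψ : Function.Semiconj π ψ φ) :
    GrowthLE (fun n => (twistedGrowth φ T n : ℝ)) (fun n => (twistedGrowth ψ S n : ℝ)) := by
  obtain ⟨C, hC⟩ := exists_lift_wordNorm_le hS hT hπ
  refine GrowthLE.of_le_mul (m := 1) (C := C)
    (Nat.mono_cast.comp (twistedGrowth_mono ψ hS)) fun n => ?_
  have hball := wordBall_finite hS (C * n)
  have image_subset : twistedClass φ '' wordBall T n ⊆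
      (fun x => twistedClass φ (π x)) '' wordBall S (C * n) := by
    rintro _ ⟨h, hh, rfl⟩
    obtain ⟨g, rfl, hg⟩ := hC h
    exact ⟨g, hg.trans (Nat.mul_le_mul_left C hh), rfl⟩
  rw [Nat.cast_one, one_mul, Nat.cast_le, twistedGrowth_eq_ncard_image,
    twistedGrowth_eq_ncard_image]
  exact (Set.ncard_le_ncard image_subset (hball.image _)).trans
    (ncard_image_twistedClass_map_le hπψ hball)

lemma growthLE_twistedGrowth_of_finite_ker [Finite π.ker]
    (hS : Subgroup.closure (S : Set G) = ⊤) (hT : Subgroup.closure (T : Set H) = ⊤)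
    (hπ : Function.Surjective π) (hπψ : Function.Semiconj π ψ φ) :
    GrowthLE (fun n => (twistedGrowth ψ S n : ℝ)) (fun n => (twistedGrowth φ T n : ℝ)) := by
  obtain ⟨C, hC⟩ := exists_wordNorm_map_le hS hT π
  refine GrowthLE.of_le_mul (m := Nat.card π.ker) (C := C)
    (Nat.mono_cast.comp (twistedGrowth_mono φ hT)) fun n => ?_
  have image_subset : (fun x => twistedClass φ (π x)) '' wordBall S n ⊆
      twistedClass φ '' wordBall T (C * n) := by
    rintro _ ⟨g, hg, rfl⟩
    exact ⟨π g, (hC g).trans (Nat.mul_le_mul_left C hg), rfl⟩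
  rw [← Nat.cast_mul, Nat.cast_le, twistedGrowth_eq_ncard_image, twistedGrowth_eq_ncard_image]
  exact (ncard_image_twistedClass_le_card_ker_mul hπ hπψ (wordBall_finite hS n)).trans
    (Nat.mul_le_mul_left _ (Set.ncard_le_ncard image_subset ((wordBall_finite hT _).image _)))

end TwistedGrowth

/-- If `N` is a finite normal subgroup preserved by `ψ`, then the twisted conjugacy
growth of `G` agrees with that of `G/N` (up to `≃`). -/
theorem twisted_growth_finite_normal_quotient
    (G : Type*) [Group G] (N : Subgroup G) [N.Normal]
    (hNfin : (N : Set G).Finite)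
    (ψ : G ≃* G) (hψN : Subgroup.map ψ.toMonoidHom N = N)
    (S : Finset G) (hS : Subgroup.closure (S : Set G) = ⊤)
    (T : Finset (G ⧸ N)) (hT : Subgroup.closure (T : Set (G ⧸ N)) = ⊤) :
    GrowthEquiv (fun n => (twistedGrowth ψ S n : ℝ))
      (fun n => (twistedGrowth (QuotientGroup.congr N N ψ hψN) T n : ℝ)) := by
  have hπ := QuotientGroup.mk'_surjective N
  have hπψ : Function.Semiconj (QuotientGroup.mk' N) ψ (QuotientGroup.congr N N ψ hψN) :=
    fun _ => rfl
  have : Finite (QuotientGroup.mk' N).ker := by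
    rw [QuotientGroup.ker_mk']
    exact hNfin
  exact ⟨growthLE_twistedGrowth_of_finite_ker hS hT hπ hπψ,
    growthLE_twistedGrowth_of_surjective hS hT hπ hπψ⟩
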